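/- Let μ⁻, μ⁺ be probability measures on ℝ^d with compact supports X⁻, X⁺ and let c : X⁻ × X⁺ → ℝ be Lipschitz with respect to the norm ‖(x,y)‖ = max(|x|,|y|). Let d⁻, d⁺ denote the upper entropy dimensions of μ⁻, μ⁺. Then limsup_{ε→0⁺} (v_ε − v_0)/(ε·log(1/ε)) ≤ min(d⁺, d⁻); equivalently, v_ε ≤ v_0 + (min(d⁺,d⁻))·ε·log(1/ε) + o(ε·log(1/ε)) as ε → 0⁺. -/

import Mathlib

open MeasureTheory Real Set Filter Classical
open scoped ENNReal NNReal Topology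

noncomputable section

/-- Relative entropy (Kullback–Leibler divergence) `Ent(γ | q)`, with values in `EReal`:
it equals `∫ ρ log ρ dq` if `γ = ρ·q` (with `ρ log ρ` integrable) and `+∞` otherwise. -/
def Ent {α : Type*} [MeasurableSpace α] (γ q : Measure α) : EReal :=
  if γ ≪ q ∧ Integrable (fun x => ((γ.rnDeriv q) x).toReal * Real.log ((γ.rnDeriv q) x).toReal) q
  then ((∫ x, ((γ.rnDeriv q) x).toReal * Real.log ((γ.rnDeriv q) x).toReal ∂q : ℝ) : EReal)
  else ⊤

/-- Entropic optimal transport cost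
`v_ε = inf { ∫ c dγ + ε Ent(γ | μ⁻ ⊗ μ⁺) : γ coupling of μ⁻ and μ⁺ }`. -/
def entCost {α β : Type*} [MeasurableSpace α] [MeasurableSpace β]
    (μm : Measure α) (μp : Measure β) (c : α × β → ℝ) (ε : ℝ) : EReal :=
  sInf {v : EReal | ∃ γ : Measure (α × β), IsProbabilityMeasure γ ∧ γ.fst = μm ∧ γ.snd = μp ∧
    v = ((∫ p, c p ∂γ : ℝ) : EReal) + (ε : EReal) * Ent γ (μm.prod μp)}

/-- Support of a measure: the set of points all of whose open neighbourhoods have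
positive measure. -/
def msupport {α : Type*} [TopologicalSpace α] [MeasurableSpace α] (μ : Measure α) : Set α :=
  {x | ∀ U : Set α, IsOpen U → x ∈ U → μ U ≠ 0}

/-- `H_δ(μ)`: infimum over countable Borel coverings of the space by sets of diameter `≤ δ`
of `Σ_n μ(A_n) log(1/μ(A_n))`, with values in `ℝ≥0∞`. -/
def entH {α : Type*} [MeasurableSpace α] [PseudoEMetricSpace α] (δ : ℝ) (μ : Measure α) : ℝ≥0∞ :=
  ⨅ (A : ℕ → Set α) (_ : (∀ n, MeasurableSet (A n)) ∧
      (∀ n, EMetric.diam (A n) ≤ ENNReal.ofReal δ) ∧ (⋃ n, A n) = Set.univ),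
    ∑' n, ENNReal.ofReal (Real.negMulLog ((μ (A n)).toReal))

/-- Upper entropy dimension of a measure: `limsup_{δ→0⁺} H_δ(μ)/log(1/δ)`. -/
def upperEntDim {α : Type*} [MeasurableSpace α] [PseudoEMetricSpace α] (μ : Measure α) : ℝ :=
  Filter.limsup (fun δ : ℝ => (entH δ μ).toReal / Real.log (1 / δ)) (nhdsWithin 0 (Set.Ioi 0))

open ProbabilityTheory

section Entropy

variable {α β : Type*} [MeasurableSpace α] [MeasurableSpace β]

lemma sub_one_le_mul_log {t : ℝ} (ht : 0 ≤ t) : t - 1 ≤ t * Real.log t := by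
  rcases ht.eq_or_lt with rfl | ht
  · simp
  · have h := mul_le_mul_of_nonneg_left (Real.one_sub_inv_le_log_of_pos ht) ht.le
    rwa [mul_sub, mul_one, mul_inv_cancel₀ ht.ne'] at h

lemma Ent_nonneg (γ q : Measure α) [IsProbabilityMeasure γ] [IsProbabilityMeasure q] :
    0 ≤ Ent γ q := by
  unfold Ent
  split_ifs with h
  · have h1 : ∫ x, (((γ.rnDeriv q) x).toReal - 1) ∂q = 0 := by
      rw [integral_sub Measure.integrable_toReal_rnDeriv (integrable_const _),
        Measure.integral_toReal_rnDeriv h.1]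
      simp
    have h2 : ∫ x, (((γ.rnDeriv q) x).toReal - 1) ∂q ≤
        ∫ x, ((γ.rnDeriv q) x).toReal * Real.log ((γ.rnDeriv q) x).toReal ∂q :=
      integral_mono (Measure.integrable_toReal_rnDeriv.sub (integrable_const _)) h.2
        fun x => sub_one_le_mul_log ENNReal.toReal_nonneg
    exact_mod_cast h1 ▸ h2
  · exact le_top

/-- If `γ ≤ G · q` then the relative entropy of `γ` is at most `∫ log G dγ`. -/
lemma Ent_le_integral_log {γ q : Measure α} [IsProbabilityMeasure γ] [IsProbabilityMeasure q]
    {G : α → ℝ≥0∞} (hle : γ ≤ q.withDensity G) (hGtop : ∀ᵐ x ∂q, G x ≠ ∞)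
    (hint : Integrable (fun x => Real.log (G x).toReal) γ) :
    Ent γ q ≤ ((∫ x, Real.log (G x).toReal ∂γ : ℝ) : EReal) := by
  have hac : γ ≪ q :=
    (Measure.absolutelyContinuous_of_le hle).trans (withDensity_absolutelyContinuous q G)
  have hρ : γ.rnDeriv q ≤ᵐ[q] G := by
    refine ae_le_of_forall_setLIntegral_le_of_sigmaFinite (Measure.measurable_rnDeriv _ _)
      fun s hs _ => ?_
    calc ∫⁻ x in s, γ.rnDeriv q x ∂q ≤ γ s := Measure.setLIntegral_rnDeriv_le s
      _ ≤ q.withDensity G s := hle s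
      _ = ∫⁻ x in s, G x ∂q := withDensity_apply _ hs
  have hmono : ∀ᵐ x ∂q, ((γ.rnDeriv q) x).toReal * Real.log ((γ.rnDeriv q) x).toReal ≤
      ((γ.rnDeriv q) x).toReal * Real.log (G x).toReal := by
    filter_upwards [hρ, hGtop] with x hx hG
    rcases (ENNReal.toReal_nonneg (a := γ.rnDeriv q x)).eq_or_lt with h0 | h0
    · simp [← h0]
    · exact mul_le_mul_of_nonneg_left
        (Real.log_le_log h0 (ENNReal.toReal_mono hG hx)) h0.le
  have hintG : Integrable (fun x => ((γ.rnDeriv q) x).toReal * Real.log (G x).toReal) q := by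
    simpa [smul_eq_mul] using (integrable_rnDeriv_smul_iff hac).2 hint
  have hintρ : Integrable
      (fun x => ((γ.rnDeriv q) x).toReal * Real.log ((γ.rnDeriv q) x).toReal) q := by
    refine integrable_of_le_of_le ?_
      (Eventually.of_forall fun x => sub_one_le_mul_log ENNReal.toReal_nonneg) hmono
      (Measure.integrable_toReal_rnDeriv.sub (integrable_const 1)) hintG
    have hm := (Measure.measurable_rnDeriv γ q).ennreal_toReal
    exact (hm.mul hm.log).aestronglyMeasurable
  rw [Ent, if_pos ⟨hac, hintρ⟩, EReal.coe_le_coe_iff]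
  calc _ ≤ ∫ x, ((γ.rnDeriv q) x).toReal * Real.log (G x).toReal ∂q :=
        integral_mono_ae hintρ hintG hmono
    _ = ∫ x, Real.log (G x).toReal ∂γ := by
        simpa [smul_eq_mul] using integral_rnDeriv_smul hac (f := fun x => Real.log (G x).toReal)

lemma Ent_map_measurableEquiv (e : α ≃ᵐ β) (γ q : Measure α) [SigmaFinite γ] [SigmaFinite q] :
    Ent (γ.map e) (q.map e) = Ent γ q := by
  have hac : γ.map e ≪ q.map e ↔ γ ≪ q := by
    refine ⟨fun h => ?_, fun h => h.map e.measurable⟩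
    have := h.map e.symm.measurable
    simpa [Measure.map_map e.symm.measurable e.measurable] using this
  have hae : (fun x => ((γ.map e).rnDeriv (q.map e) (e x)).toReal *
      Real.log ((γ.map e).rnDeriv (q.map e) (e x)).toReal) =ᵐ[q]
      fun x => ((γ.rnDeriv q) x).toReal * Real.log ((γ.rnDeriv q) x).toReal := by
    filter_upwards [e.measurableEmbedding.rnDeriv_map γ q] with x hx
    rw [hx]
  have hint : Integrable (fun x => ((γ.map e).rnDeriv (q.map e) x).toReal *
      Real.log ((γ.map e).rnDeriv (q.map e) x).toReal) (q.map e) ↔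
      Integrable (fun x => ((γ.rnDeriv q) x).toReal * Real.log ((γ.rnDeriv q) x).toReal) q := by
    rw [integrable_map_equiv e]
    exact integrable_congr hae
  unfold Ent
  rw [hac, hint, integral_map_equiv e, integral_congr_ae hae]

lemma entCost_swap_le (μm : Measure α) (μp : Measure β) [SigmaFinite μm] [SigmaFinite μp]
    (c : α × β → ℝ) (ε : ℝ) :
    entCost μp μm (c ∘ Prod.swap) ε ≤ entCost μm μp c ε := by
  refine le_sInf ?_
  rintro v ⟨γ, hγ, h1, h2, rfl⟩
  let e : α × β ≃ᵐ β × α := MeasurableEquiv.prodComm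
  refine sInf_le ⟨γ.map e, Measure.isProbabilityMeasure_map e.measurable.aemeasurable, ?_, ?_, ?_⟩
  · rw [← h2, Measure.fst, Measure.snd, Measure.map_map measurable_fst e.measurable]; rfl
  · rw [← h1, Measure.fst, Measure.snd, Measure.map_map measurable_snd e.measurable]; rfl
  · have hprod : (μm.prod μp).map e = μp.prod μm := Measure.prod_swap
    rw [integral_map_equiv e, ← Ent_map_measurableEquiv e γ, hprod]
    rfl

lemma entCost_swap (μm : Measure α) (μp : Measure β) [SigmaFinite μm] [SigmaFinite μp]
    (c : α × β → ℝ) (ε : ℝ) :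
    entCost μp μm (c ∘ Prod.swap) ε = entCost μm μp c ε :=
  (entCost_swap_le μm μp c ε).antisymm (entCost_swap_le μp μm (c ∘ Prod.swap) ε)

end Entropy

section BlockApproximation

variable {α β : Type*} [MeasurableSpace α] [MeasurableSpace β]

lemma lintegral_comp_snd {γ : Measure (α × β)} {ν : Measure β} (h : γ.snd = ν) {f : β → ℝ≥0∞}
    (hf : Measurable f) : ∫⁻ p, f p.2 ∂γ = ∫⁻ y, f y ∂ν := by
  rw [← h, Measure.snd, lintegral_map hf measurable_snd]

/-- The law of a `ν`-distributed point conditioned to lie in the cell `N ⁻¹' {n}`,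
with the value `ν` on null cells. -/
def cellKernel (ν : Measure β) (N : β → ℕ) : Kernel ℕ β :=
  Kernel.ofFunOfCountable fun n => if ν (N ⁻¹' {n}) = 0 then ν else ν[|N ⁻¹' {n}]

lemma cellKernel_apply (ν : Measure β) (N : β → ℕ) (n : ℕ) :
    cellKernel ν N n = if ν (N ⁻¹' {n}) = 0 then ν else ν[|N ⁻¹' {n}] := rfl

instance (ν : Measure β) [IsProbabilityMeasure ν] (N : β → ℕ) :
    IsMarkovKernel (cellKernel ν N) := by
  refine ⟨fun n => ?_⟩
  rw [cellKernel_apply]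
  split_ifs with h
  · infer_instance
  · exact cond_isProbabilityMeasure h

lemma ae_measure_cell_ne_zero (ν : Measure β) (N : β → ℕ) :
    ∀ᵐ y ∂ν, ν (N ⁻¹' {N y}) ≠ 0 := by
  have : ∀ᵐ y ∂ν, ∀ n, ν (N ⁻¹' {n}) = 0 → y ∉ N ⁻¹' {n} := by
    refine ae_all_iff.2 fun n => ?_
    by_cases h : ν (N ⁻¹' {n}) = 0
    · filter_upwards [measure_eq_zero_iff_ae_notMem.1 h] with y hy _ using hy
    · simp [h]
  filter_upwards [this] with y hy h using hy _ h rfl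

/-- Resampling the second coordinate of a coupling inside the cells of a countable partition. -/
lemma exists_block_approximation (μm : Measure α) (μp : Measure β)
    [IsProbabilityMeasure μm] [IsProbabilityMeasure μp] (γ : Measure (α × β))
    [IsProbabilityMeasure γ] (hfst : γ.fst = μm) (hsnd : γ.snd = μp)
    {N : β → ℕ} (hN : Measurable N) :
    ∃ Λ : Measure ((α × β) × β), IsProbabilityMeasure Λ ∧ Λ.fst = γ ∧
      (Λ.map fun z => (z.1.1, z.2)).fst = μm ∧ (Λ.map fun z => (z.1.1, z.2)).snd = μp ∧
      (Λ.map fun z => (z.1.1, z.2)) ≤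
        (μm.prod μp).withDensity (fun p => (μp (N ⁻¹' {N p.2}))⁻¹) ∧
      ∀ᵐ z ∂Λ, N z.2 = N z.1.2 := by
  have hcell : ∀ n, MeasurableSet (N ⁻¹' {n}) := fun n => hN (measurableSet_singleton n)
  have hN' : Measurable fun p : α × β => N p.2 := hN.comp measurable_snd
  have hmap : Measurable fun z : (α × β) × β => (z.1.1, z.2) := by fun_prop
  let κ : Kernel (α × β) β := (cellKernel μp N).comap (fun p => N p.2) hN'
  have hκ : ∀ p, κ p = cellKernel μp N (N p.2) := fun p => rfl
  have hγcell : ∀ᵐ p ∂γ, μp (N ⁻¹' {N p.2}) ≠ 0 := by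
    have := ae_measure_cell_ne_zero μp N
    rw [← hsnd, Measure.snd] at this
    simpa only [← hsnd, Measure.snd] using ae_of_ae_map measurable_snd.aemeasurable this
  refine ⟨γ ⊗ₘ κ, inferInstance, Measure.fst_compProd _ _, ?_, ?_, ?_, ?_⟩
  · have h1 : ((γ ⊗ₘ κ).fst).fst = μm := by rw [Measure.fst_compProd, hfst]
    rw [Measure.fst, Measure.fst, Measure.map_map measurable_fst measurable_fst] at h1
    rw [Measure.fst, Measure.map_map measurable_fst hmap, ← h1]
    rfl
  · ext s hs
    rw [Measure.snd_apply hs, Measure.map_apply hmap (measurable_snd hs),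
      Measure.compProd_apply (hmap (measurable_snd hs))]
    calc ∫⁻ p, κ p (Prod.mk p ⁻¹' ((fun z : (α × β) × β => (z.1.1, z.2)) ⁻¹'
            (Prod.snd ⁻¹' s))) ∂γ
        = ∫⁻ p, cellKernel μp N (N p.2) s ∂γ := rfl
      _ = ∫⁻ n, cellKernel μp N n s ∂(μp.map N) := by
        have hms : Measurable fun n => cellKernel μp N n s := measurable_of_countable _
        rw [lintegral_map hms hN]
        exact lintegral_comp_snd hsnd (hms.comp hN)
      _ = ∑' n, μp (s ∩ N ⁻¹' {n}) := by
        rw [lintegral_countable']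
        refine tsum_congr fun n => ?_
        rw [Measure.map_apply hN (measurableSet_singleton n), cellKernel_apply]
        split_ifs with h
        · rw [h, mul_zero, measure_mono_null inter_subset_right h]
        · rw [mul_comm, cond_apply (hcell n), ← mul_assoc,
            ENNReal.mul_inv_cancel h (measure_ne_top _ _), one_mul, inter_comm]
      _ = μp s := by
        have hdisj : Pairwise (Function.onFun Disjoint fun n => s ∩ N ⁻¹' {n}) := by
          intro i j hij
          exact ((disjoint_singleton.2 hij).preimage N).mono inter_subset_right inter_subset_right
        rw [← measure_iUnion hdisj fun n => hs.inter (hcell n), ← inter_iUnion,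
          ← preimage_iUnion, iUnion_of_singleton, preimage_univ, inter_univ]
  · have hdens : Measurable fun y => (μp (N ⁻¹' {N y}))⁻¹ :=
      (measurable_of_countable fun n => (μp (N ⁻¹' {n}))⁻¹).comp hN
    refine Measure.le_iff.2 fun s hs => ?_
    rw [Measure.map_apply hmap hs, Measure.compProd_apply (hmap hs)]
    have hle : ∀ n, μp (N ⁻¹' {n}) ≠ 0 →
        cellKernel μp N n ≤ μp.withDensity fun y => (μp (N ⁻¹' {N y}))⁻¹ := by
      intro n hn
      refine Measure.le_iff.2 fun t ht => ?_
      rw [cellKernel_apply, if_neg hn, cond_apply (hcell n), withDensity_apply _ ht]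
      calc (μp (N ⁻¹' {n}))⁻¹ * μp (N ⁻¹' {n} ∩ t)
          = ∫⁻ y in N ⁻¹' {n} ∩ t, (μp (N ⁻¹' {N y}))⁻¹ ∂μp := by
            rw [← setLIntegral_const]
            refine setLIntegral_congr_fun ((hcell n).inter ht) fun y hy => ?_
            have : N y = n := hy.1
            simp only [this]
        _ ≤ _ := lintegral_mono_set inter_subset_right
    calc ∫⁻ p, κ p (Prod.mk p ⁻¹' ((fun z : (α × β) × β => (z.1.1, z.2)) ⁻¹' s)) ∂γ
        ≤ ∫⁻ p, (μp.withDensity fun y => (μp (N ⁻¹' {N y}))⁻¹) (Prod.mk p.1 ⁻¹' s) ∂γ := by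
          refine lintegral_mono_ae ?_
          filter_upwards [hγcell] with p hp
          exact hle _ hp _
      _ = ∫⁻ x, (μp.withDensity fun y => (μp (N ⁻¹' {N y}))⁻¹) (Prod.mk x ⁻¹' s) ∂μm := by
          rw [← hfst, Measure.fst, lintegral_map (measurable_measure_prodMk_left hs) measurable_fst]
      _ = (μm.prod (μp.withDensity fun y => (μp (N ⁻¹' {N y}))⁻¹)) s :=
          (Measure.prod_apply hs).symm
      _ = _ := by rw [prod_withDensity_right]; exact hdens
  · have hset : MeasurableSet {z : (α × β) × β | N z.2 = N z.1.2} :=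
      measurableSet_eq_fun (hN.comp measurable_snd) (hN'.comp measurable_fst)
    rw [Measure.ae_compProd_iff hset]
    filter_upwards [hγcell] with p hp
    rw [hκ, cellKernel_apply, if_neg hp]
    filter_upwards [ae_cond_mem (μ := μp) (hcell (N p.2))] with y hy using hy

/-- Entropic cost bound obtained from a countable partition, encoded by its index map `N`. -/
lemma entCost_le_of_partition (μm : Measure α) (μp : Measure β)
    [IsProbabilityMeasure μm] [IsProbabilityMeasure μp] {c : α × β → ℝ} {ε r : ℝ} (hε : 0 ≤ ε)
    {S : Set α} {T : Set β} (hS : ∀ᵐ x ∂μm, x ∈ S) (hT : ∀ᵐ y ∂μp, y ∈ T)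
    (hcint : ∀ γ : Measure (α × β), IsProbabilityMeasure γ → γ.fst = μm → γ.snd = μp →
      Integrable c γ)
    {N : β → ℕ} (hN : Measurable N)
    (hcN : ∀ x ∈ S, ∀ y ∈ T, ∀ y' ∈ T, N y' = N y → c (x, y') ≤ c (x, y) + r)
    {h : ℝ} (hh : 0 ≤ h)
    (hH : ∑' n, ENNReal.ofReal (Real.negMulLog (μp (N ⁻¹' {n})).toReal) ≤ ENNReal.ofReal h)
    (γ : Measure (α × β)) [IsProbabilityMeasure γ] (hfst : γ.fst = μm) (hsnd : γ.snd = μp) :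
    entCost μm μp c ε ≤ ((∫ p, c p ∂γ + r + ε * h : ℝ) : EReal) := by
  obtain ⟨Λ, hΛ, hΛ1, h1, h2, hle, hΛN⟩ := exists_block_approximation μm μp γ hfst hsnd hN
  have hmap : Measurable fun z : (α × β) × β => (z.1.1, z.2) := by fun_prop
  set γ' : Measure (α × β) := Λ.map fun z => (z.1.1, z.2) with hγ'
  have hp' : IsProbabilityMeasure γ' := Measure.isProbabilityMeasure_map hmap.aemeasurable
  have hcost : ∫ p, c p ∂γ' ≤ ∫ p, c p ∂γ + r := by
    have hi' : Integrable c γ' := hcint γ' hp' h1 h2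
    have hi : Integrable c Λ.fst := hΛ1 ▸ hcint γ ‹_› hfst hsnd
    have hxS : ∀ᵐ z ∂Λ, z.1.1 ∈ S := by
      rw [← h1, Measure.fst, hγ'] at hS
      exact ae_of_ae_map hmap.aemeasurable (ae_of_ae_map measurable_fst.aemeasurable hS)
    have hyT' : ∀ᵐ z ∂Λ, z.2 ∈ T := by
      rw [← h2, Measure.snd, hγ'] at hT
      exact ae_of_ae_map hmap.aemeasurable (ae_of_ae_map measurable_snd.aemeasurable hT)
    have hyT : ∀ᵐ z ∂Λ, z.1.2 ∈ T := by
      rw [← hsnd, Measure.snd, ← hΛ1, Measure.fst] at hT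
      exact ae_of_ae_map measurable_fst.aemeasurable
        (ae_of_ae_map measurable_snd.aemeasurable hT)
    have hiΛ : Integrable (fun z => c z.1) Λ := hi.comp_measurable measurable_fst
    calc ∫ p, c p ∂γ' = ∫ z, c (z.1.1, z.2) ∂Λ :=
          integral_map hmap.aemeasurable hi'.aestronglyMeasurable
      _ ≤ ∫ z, (c z.1 + r) ∂Λ := by
          refine integral_mono_ae (hi'.comp_measurable hmap) (hiΛ.add (integrable_const r)) ?_
          filter_upwards [hxS, hyT, hyT', hΛN] with z hz1 hz2 hz3 hz4
          exact hcN _ hz1 _ hz2 _ hz3 hz4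
      _ = ∫ z, c z.1 ∂Λ + r := by
          rw [integral_add hiΛ (integrable_const r)]
          simp
      _ = ∫ p, c p ∂γ + r := by
          rw [← hΛ1, Measure.fst, integral_map measurable_fst.aemeasurable hi.aestronglyMeasurable]
  have hlogN : Measurable fun n : ℕ => Real.log ((μp (N ⁻¹' {n}))⁻¹).toReal :=
    measurable_of_countable _
  have hlog0 : ∀ n : ℕ, 0 ≤ Real.log ((μp (N ⁻¹' {n}))⁻¹).toReal := by
    intro n
    rw [ENNReal.toReal_inv, Real.log_inv, neg_nonneg]
    exact Real.log_nonpos ENNReal.toReal_nonneg measureReal_le_one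
  have hlint : ∫⁻ p, ENNReal.ofReal (Real.log ((μp (N ⁻¹' {N p.2}))⁻¹).toReal) ∂γ' ≤
      ENNReal.ofReal h := by
    refine le_trans (le_of_eq ?_) hH
    have hmeas : Measurable fun n : ℕ =>
      ENNReal.ofReal (Real.log ((μp (N ⁻¹' {n}))⁻¹).toReal) := measurable_of_countable _
    calc ∫⁻ p, ENNReal.ofReal (Real.log ((μp (N ⁻¹' {N p.2}))⁻¹).toReal) ∂γ'
        = ∫⁻ n, ENNReal.ofReal (Real.log ((μp (N ⁻¹' {n}))⁻¹).toReal) ∂(μp.map N) := by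
          rw [lintegral_map hmeas hN]
          exact lintegral_comp_snd h2 (hmeas.comp hN)
      _ = _ := by
          rw [lintegral_countable']
          refine tsum_congr fun n => ?_
          rw [Measure.map_apply hN (measurableSet_singleton n),
            ← ENNReal.ofReal_toReal (measure_ne_top μp (N ⁻¹' {n})),
            ← ENNReal.ofReal_mul (by simpa using hlog0 n)]
          simp [Real.negMulLog, Real.log_inv, mul_comm]
  have hmeas : AEStronglyMeasurable
      (fun p : α × β => Real.log ((μp (N ⁻¹' {N p.2}))⁻¹).toReal) γ' :=
    (hlogN.comp (hN.comp measurable_snd)).aestronglyMeasurable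
  have hint : Integrable (fun p : α × β => Real.log ((μp (N ⁻¹' {N p.2}))⁻¹).toReal) γ' := by
    refine ⟨hmeas, ?_⟩
    rw [hasFiniteIntegral_iff_ofReal (Eventually.of_forall fun p => hlog0 _)]
    exact hlint.trans_lt ENNReal.ofReal_lt_top
  have hEnt : Ent γ' (μm.prod μp) ≤ (h : EReal) := by
    refine (Ent_le_integral_log hle ?_ hint).trans (EReal.coe_le_coe_iff.2 ?_)
    · have := Measure.quasiMeasurePreserving_snd (μ := μm) (ν := μp) |>.ae
        (ae_measure_cell_ne_zero μp N)
      filter_upwards [this] with p hp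
      simpa using hp
    · rw [integral_eq_lintegral_of_nonneg_ae (Eventually.of_forall fun p => hlog0 _) hmeas]
      exact ENNReal.toReal_le_of_le_ofReal hh hlint
  calc entCost μm μp c ε
      ≤ ((∫ p, c p ∂γ' : ℝ) : EReal) + (ε : EReal) * Ent γ' (μm.prod μp) :=
        sInf_le ⟨γ', hp', h1, h2, rfl⟩
    _ ≤ ((∫ p, c p ∂γ + r : ℝ) : EReal) + (ε : EReal) * (h : EReal) :=
        add_le_add (EReal.coe_le_coe_iff.2 hcost)
          (mul_le_mul_of_nonneg_left hEnt (EReal.coe_nonneg.2 hε))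
    _ = ((∫ p, c p ∂γ + r + ε * h : ℝ) : EReal) := by push_cast; rfl

end BlockApproximation

section CoverToPartition

lemma negMulLog_le_one_sub {t : ℝ} (ht : 0 ≤ t) : Real.negMulLog t ≤ 1 - t := by
  have := sub_one_le_mul_log ht
  rw [Real.negMulLog]
  linarith

/-- `-t log t` is monotone on `[0, 1/2]` up to a linear error. -/
lemma negMulLog_le_negMulLog_add {a b : ℝ} (hb : 0 ≤ b) (hba : b ≤ a) (ha : a ≤ 1 / 2) :
    Real.negMulLog b ≤ Real.negMulLog a + b := by
  rcases hb.eq_or_lt with rfl | hb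
  · simpa using Real.negMulLog_nonneg hba (by linarith)
  have ha0 : 0 < a := hb.trans_le hba
  have hlog : Real.log a ≤ -Real.log 2 := by
    rw [← Real.log_inv]
    exact Real.log_le_log ha0 (by linarith)
  have h1 : b * Real.log a - b * Real.log b ≤ b * Real.log 2 + a / 2 - b := by
    have h := Real.log_le_sub_one_of_pos (show 0 < a / (2 * b) by positivity)
    rw [Real.log_div ha0.ne' (by positivity), Real.log_mul two_ne_zero hb.ne'] at h
    have h' := mul_le_mul_of_nonneg_left h hb.le
    have : b * (a / (2 * b) - 1) = a / 2 - b := by field_simp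
    linarith
  have h2 : (a - b) * Real.log a ≤ (a - b) * (-Real.log 2) :=
    mul_le_mul_of_nonneg_left hlog (sub_nonneg.2 hba)
  have h3 : b * Real.log 2 ≤ b * 1 :=
    mul_le_mul_of_nonneg_left (by linarith [Real.log_two_lt_d9]) hb.le
  have h4 : a * (1 / 2) ≤ a * Real.log 2 :=
    mul_le_mul_of_nonneg_left (by linarith [Real.log_two_gt_d9]) ha0.le
  simp only [Real.negMulLog]
  linarith

variable {α : Type*} [MeasurableSpace α]

lemma tsum_measure_preimage_singleton_eq_one (μ : Measure α) [IsProbabilityMeasure μ]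
    {N : α → ℕ} (hN : Measurable N) : ∑' n, μ (N ⁻¹' {n}) = 1 := by
  rw [← measure_iUnion (fun i j hij => (disjoint_singleton.2 hij).preimage N)
    fun n => hN (measurableSet_singleton n), ← preimage_iUnion, iUnion_of_singleton,
    preimage_univ, measure_univ]

/-- A countable cover can be turned into a countable partition (encoded by its index map) with
cells of twice the diameter, at bounded cost in entropy. All cover elements of mass larger than
`1/2` pairwise meet, and are merged into a single cell. -/
lemma exists_partition_of_cover [PseudoEMetricSpace α] (μ : Measure α) [IsProbabilityMeasure μ]
    {A : ℕ → Set α} (hA : ∀ n, MeasurableSet (A n)) {r : ℝ≥0∞}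
    (hdiam : ∀ n, Metric.ediam (A n) ≤ r) (hcover : ⋃ n, A n = univ) :
    ∃ N : α → ℕ, Measurable N ∧ (∀ x y, N x = N y → edist x y ≤ 2 * r) ∧
      ∑' n, ENNReal.ofReal (Real.negMulLog (μ (N ⁻¹' {n})).toReal) ≤
        ∑' n, ENNReal.ofReal (Real.negMulLog (μ (A n)).toReal) + 2 := by
  set U : Set α := ⋃ n ∈ {n | 1 / 2 < (μ (A n)).toReal}, A n with hU
  have hUm : MeasurableSet U := MeasurableSet.biUnion (to_countable _) fun n _ => hA n
  have hmem : ∀ x, ∃ n, x ∈ A n := fun x => mem_iUnion.1 (hcover ▸ mem_univ x)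
  set N : α → ℕ := fun x => if x ∈ U then 0 else Nat.find (hmem x) + 1 with hNdef
  have hN : Measurable N :=
    Measurable.ite hUm measurable_const ((measurable_find hmem hA).add_const 1)
  have hNsucc : ∀ n x, N x = n + 1 → x ∉ U ∧ x ∈ A n := by
    intro n x hx
    by_cases hxU : x ∈ U
    · simp [hNdef, hxU] at hx
    · simp only [hNdef, hxU, if_false, Nat.add_right_cancel_iff] at hx
      exact ⟨hxU, hx ▸ Nat.find_spec (hmem x)⟩
  have hNzero : ∀ x, N x = 0 → x ∈ U := by
    intro x hx
    by_contra hxU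
    simp [hNdef, hxU] at hx
  refine ⟨N, hN, fun x y hxy => ?_, ?_⟩
  · rcases hn : N x with _ | n
    · have hx := hNzero x hn
      have hy := hNzero y (hxy ▸ hn)
      simp only [hU, mem_iUnion, mem_ofPred_eq] at hx hy
      obtain ⟨i, hi, hxi⟩ := hx
      obtain ⟨j, hj, hyj⟩ := hy
      obtain ⟨z, hzi, hzj⟩ : (A i ∩ A j).Nonempty := by
        by_contra hne
        have hd : Disjoint (A i) (A j) :=
          disjoint_iff_inter_eq_empty.2 (not_nonempty_iff_eq_empty.1 hne)
        have h1 := measureReal_union (μ := μ) hd (hA j)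
        have h2 : μ.real (A i ∪ A j) ≤ 1 := measureReal_le_one
        simp only [measureReal_def] at h1 h2
        linarith
      calc edist x y ≤ edist x z + edist z y := edist_triangle _ _ _
        _ ≤ r + r := add_le_add (Metric.edist_le_of_ediam_le hxi hzi (hdiam i))
            (Metric.edist_le_of_ediam_le hzj hyj (hdiam j))
        _ = 2 * r := (two_mul r).symm
    · refine (Metric.edist_le_of_ediam_le (hNsucc n x hn).2 (hNsucc n y (hxy ▸ hn)).2
        (hdiam n)).trans ?_
      exact le_mul_of_one_le_left zero_le one_le_two
  · have h0 : ENNReal.ofReal (Real.negMulLog (μ (N ⁻¹' {0})).toReal) ≤ 1 := by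
      rw [← ENNReal.ofReal_one]
      refine ENNReal.ofReal_le_ofReal ((negMulLog_le_one_sub ENNReal.toReal_nonneg).trans ?_)
      linarith [ENNReal.toReal_nonneg (a := μ (N ⁻¹' {0}))]
    have hsucc : ∀ n, ENNReal.ofReal (Real.negMulLog (μ (N ⁻¹' {n + 1})).toReal) ≤
        ENNReal.ofReal (Real.negMulLog (μ (A n)).toReal) + μ (N ⁻¹' {n + 1}) := by
      intro n
      by_cases hn : 1 / 2 < (μ (A n)).toReal
      · have : N ⁻¹' {n + 1} = ∅ := by
          refine eq_empty_of_forall_notMem fun x hx => ?_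
          obtain ⟨hxU, hxA⟩ := hNsucc n x hx
          exact hxU (mem_biUnion hn hxA)
        simp [this]
      · have hsub : N ⁻¹' {n + 1} ⊆ A n := fun x hx => (hNsucc n x hx).2
        conv_rhs => rw [← ENNReal.ofReal_toReal (measure_ne_top μ (N ⁻¹' {n + 1}))]
        refine (ENNReal.ofReal_le_ofReal (negMulLog_le_negMulLog_add ENNReal.toReal_nonneg
          (ENNReal.toReal_mono (measure_ne_top _ _) (measure_mono hsub)) (not_lt.1 hn))).trans ?_
        exact ENNReal.ofReal_add_le
    have hsum : ∑' n, μ (N ⁻¹' {n + 1}) ≤ 1 := by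
      rw [← tsum_measure_preimage_singleton_eq_one μ hN]
      exact ENNReal.tsum_comp_le_tsum_of_injective (add_left_injective 1) fun n => μ (N ⁻¹' {n})
    calc ∑' n, ENNReal.ofReal (Real.negMulLog (μ (N ⁻¹' {n})).toReal)
        = ENNReal.ofReal (Real.negMulLog (μ (N ⁻¹' {0})).toReal) +
          ∑' n, ENNReal.ofReal (Real.negMulLog (μ (N ⁻¹' {n + 1})).toReal) :=
          tsum_eq_zero_add' ENNReal.summable
      _ ≤ 1 + ∑' n, (ENNReal.ofReal (Real.negMulLog (μ (A n)).toReal) + μ (N ⁻¹' {n + 1})) :=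
          add_le_add h0 (ENNReal.tsum_le_tsum hsucc)
      _ ≤ 1 + (∑' n, ENNReal.ofReal (Real.negMulLog (μ (A n)).toReal) + 1) := by
          rw [ENNReal.tsum_add]
          gcongr
      _ = ∑' n, ENNReal.ofReal (Real.negMulLog (μ (A n)).toReal) + 2 := by
          rw [add_left_comm, one_add_one_eq_two]

lemma exists_partition_of_entH_ne_top [PseudoEMetricSpace α] (μ : Measure α)
    [IsProbabilityMeasure μ] {δ : ℝ} (hH : entH δ μ ≠ ∞) :
    ∃ N : α → ℕ, Measurable N ∧ (∀ x y, N x = N y → edist x y ≤ 2 * ENNReal.ofReal δ) ∧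
      ∑' n, ENNReal.ofReal (Real.negMulLog (μ (N ⁻¹' {n})).toReal) ≤
        ENNReal.ofReal ((entH δ μ).toReal + 3) := by
  have hlt : entH δ μ < entH δ μ + 1 := ENNReal.lt_add_right hH one_ne_zero
  conv_lhs at hlt => rw [entH]
  simp only [iInf_lt_iff] at hlt
  obtain ⟨A, ⟨hA, hdiam, hcover⟩, hlt⟩ := hlt
  obtain ⟨N, hN, hNd, hle⟩ := exists_partition_of_cover μ hA hdiam hcover
  refine ⟨N, hN, hNd, hle.trans ((add_le_add_left hlt.le 2).trans_eq ?_)⟩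
  rw [ENNReal.ofReal_add ENNReal.toReal_nonneg (by norm_num), ENNReal.ofReal_toReal hH,
    add_assoc]
  norm_num

end CoverToPartition

section EntropyOfCompactSupport

lemma sum_negMulLog_le_log_card {ι : Type*} (s : Finset ι) {p : ι → ℝ} (hp : ∀ k ∈ s, 0 ≤ p k)
    (hsum : ∑ k ∈ s, p k ≤ 1) : ∑ k ∈ s, Real.negMulLog (p k) ≤ Real.log s.card + 1 := by
  rcases s.eq_empty_or_nonempty with rfl | hs
  · simp
  have hcard : (0 : ℝ) < s.card := by exact_mod_cast hs.card_pos
  have hlog : 0 ≤ Real.log s.card := Real.log_natCast_nonneg _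
  have hterm : ∀ k ∈ s, Real.negMulLog (p k) ≤ p k * Real.log s.card + (s.card : ℝ)⁻¹ := by
    intro k hk
    rcases (hp k hk).eq_or_lt with h0 | h0
    · rw [← h0]; simp
    · have h := sub_one_le_mul_log (t := s.card * p k) (by positivity)
      rw [Real.log_mul hcard.ne' h0.ne'] at h
      have h' := mul_le_mul_of_nonneg_left h (inv_pos.2 hcard).le
      have e1 : (s.card : ℝ)⁻¹ * (s.card * p k - 1) = p k - (s.card : ℝ)⁻¹ := by field_simp
      have e2 : (s.card : ℝ)⁻¹ * (s.card * p k * (Real.log s.card + Real.log (p k))) =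
          p k * Real.log s.card + p k * Real.log (p k) := by field_simp
      rw [e1, e2] at h'
      rw [Real.negMulLog]
      linarith
  calc ∑ k ∈ s, Real.negMulLog (p k) ≤ ∑ k ∈ s, (p k * Real.log s.card + (s.card : ℝ)⁻¹) :=
        Finset.sum_le_sum hterm
    _ = (∑ k ∈ s, p k) * Real.log s.card + 1 := by
        rw [Finset.sum_add_distrib, ← Finset.sum_mul, Finset.sum_const, nsmul_eq_mul,
          mul_inv_cancel₀ hcard.ne']
    _ ≤ 1 * Real.log s.card + 1 := by gcongr
    _ = _ := by rw [one_mul]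

lemma entH_le_tsum {α ι : Type*} [MeasurableSpace α] [PseudoEMetricSpace α] [Encodable ι]
    (μ : Measure α) {δ : ℝ} {A : ι → Set α} (hA : ∀ k, MeasurableSet (A k))
    (hdiam : ∀ k, Metric.ediam (A k) ≤ ENNReal.ofReal δ) (hcover : ⋃ k, A k = univ) :
    entH δ μ ≤ ∑' k, ENNReal.ofReal (Real.negMulLog (μ (A k)).toReal) := by
  rw [← tsum_iUnion_decode₂ (fun s => ENNReal.ofReal (Real.negMulLog (μ s).toReal)) (by simp)]
  refine iInf₂_le _ ⟨fun n => ?_, fun n => ?_, ?_⟩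
  · exact MeasurableSet.iUnion fun k => MeasurableSet.iUnion fun _ => hA k
  · exact Encodable.iUnion_decode₂_cases (C := fun s => Metric.ediam s ≤ ENNReal.ofReal δ)
      (by simp) hdiam
  · rw [Encodable.iUnion_decode₂, hcover]

lemma ediam_cube_le {d : ℕ} {s : ℝ} (hs : 0 < s) (k : Fin d → ℤ) :
    Metric.ediam {x : EuclideanSpace ℝ (Fin d) | ∀ i, ⌊x i / s⌋ = k i} ≤
      ENNReal.ofReal ((d + 1) * s) := by
  refine Metric.ediam_le fun x hx y hy => ?_
  rw [edist_dist]
  refine ENNReal.ofReal_le_ofReal ?_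
  rw [EuclideanSpace.dist_eq]
  refine Real.sqrt_le_iff.2 ⟨by positivity, ?_⟩
  have hi : ∀ i, dist (x i) (y i) ^ 2 ≤ s ^ 2 := by
    intro i
    have h := Int.abs_sub_lt_one_of_floor_eq_floor ((hx i).trans (hy i).symm)
    rw [← sub_div, abs_div, abs_of_pos hs, div_lt_one hs] at h
    exact pow_le_pow_left₀ dist_nonneg h.le 2
  calc ∑ i, dist (x i) (y i) ^ 2 ≤ ∑ _i : Fin d, s ^ 2 := Finset.sum_le_sum fun i _ => hi i
    _ = d * s ^ 2 := by simp
    _ ≤ ((d + 1) * s) ^ 2 := by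
        have h : 0 ≤ ((d : ℝ) ^ 2 + d + 1) * s ^ 2 := by positivity
        linarith

/-- Entropy of a boundedly supported measure at scale `δ`, bounded by counting grid cells. -/
lemma exists_entH_le_mul_log {d : ℕ} (μ : Measure (EuclideanSpace ℝ (Fin d)))
    [IsProbabilityMeasure μ] {R : ℝ} (hR : 0 ≤ R) (hμ : ∀ᵐ x ∂μ, ‖x‖ ≤ R) :
    ∃ C : ℝ, 0 ≤ C ∧ ∀ δ, 0 < δ → δ ≤ Real.exp (-1) →
      entH δ μ ≤ ENNReal.ofReal (C * Real.log (1 / δ)) := by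
  set K : ℝ := 2 * R * (d + 1) + 5 with hK
  have hK1 : 1 ≤ K := by
    have : 0 ≤ 2 * R * (d + 1) := by positivity
    linarith
  have hlogK : 0 ≤ Real.log K := Real.log_nonneg hK1
  refine ⟨d * (Real.log K + 1) + 1, by positivity, fun δ hδ hδ1 => ?_⟩
  have hlogδ : 1 ≤ Real.log (1 / δ) := by
    rw [one_div, Real.log_inv, le_neg]
    exact (Real.log_le_iff_le_exp hδ).2 hδ1
  have hδle : δ ≤ 1 := hδ1.trans (Real.exp_le_one_iff.2 (by norm_num))
  set s : ℝ := δ / (d + 1) with hs_def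
  have hs : 0 < s := by positivity
  set A : (Fin d → ℤ) → Set (EuclideanSpace ℝ (Fin d)) :=
    fun k => {x | ∀ i, ⌊x i / s⌋ = k i} with hA_def
  have hA : ∀ k, MeasurableSet (A k) := by
    intro k
    have : A k = ⋂ i, (fun x : EuclideanSpace ℝ (Fin d) => ⌊x i / s⌋) ⁻¹' {k i} := by
      ext x; simp [hA_def]
    rw [this]
    refine MeasurableSet.iInter fun i => ?_
    have hm : Measurable fun x : EuclideanSpace ℝ (Fin d) => ⌊x i / s⌋ :=
      Measurable.floor (by fun_prop)
    exact hm (measurableSet_singleton _)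
  have hdiam : ∀ k, Metric.ediam (A k) ≤ ENNReal.ofReal δ := by
    intro k
    refine (ediam_cube_le hs k).trans_eq ?_
    rw [hs_def]
    congr 1
    field_simp
  have hcover : ⋃ k, A k = univ :=
    eq_univ_of_forall fun x => mem_iUnion.2 ⟨fun i => ⌊x i / s⌋, fun i => rfl⟩
  have hdisj : Pairwise (Function.onFun Disjoint A) := by
    intro k l hkl
    refine Set.disjoint_left.2 fun x hx hy => hkl ?_
    ext i
    exact (hx i).symm.trans (hy i)
  set M : ℕ := ⌈R / s⌉₊ with hM
  set F : Finset (Fin d → ℤ) := Fintype.piFinset fun _ => Finset.Icc (-(M : ℤ) - 1) M with hF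
  have hzero : ∀ k ∉ F, μ (A k) = 0 := by
    intro k hk
    rw [measure_eq_zero_iff_ae_notMem]
    filter_upwards [hμ] with x hx hxk
    refine hk (Fintype.mem_piFinset.2 fun i => ?_)
    have hxi : |x i / s| ≤ M := by
      rw [abs_div, abs_of_pos hs]
      calc |x i| / s ≤ R / s := by
            gcongr
            exact (PiLp.norm_apply_le x i).trans hx
        _ ≤ M := Nat.le_ceil _
    rw [← hxk i, Finset.mem_Icc]
    obtain ⟨h1, h2⟩ := abs_le.1 hxi
    refine ⟨Int.le_floor.2 ?_, ?_⟩
    · push_cast; linarith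
    · have := Int.floor_le (x i / s)
      exact Int.cast_le (R := ℝ).1 (by push_cast; exact this.trans h2)
  have hcard : Real.log F.card ≤ d * (Real.log K + Real.log (1 / δ)) := by
    have hc : (F.card : ℝ) = (2 * M + 2 : ℝ) ^ d := by
      rw [hF, Fintype.card_piFinset]
      simp only [Int.card_Icc, Finset.prod_const, Finset.card_univ, Fintype.card_fin]
      have : ((M : ℤ) + 1 - (-(M : ℤ) - 1)).toNat = 2 * M + 2 := by omega
      rw [this]
      push_cast
      rfl
    have hMle : (2 * M + 2 : ℝ) ≤ K * (1 / δ) := by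
      have h1 : (M : ℝ) ≤ R / s + 1 := (Nat.ceil_lt_add_one (by positivity)).le
      have h2 : R / s = R * (d + 1) * (1 / δ) := by rw [hs_def]; field_simp
      have h3 : 1 ≤ 1 / δ := by rw [le_div_iff₀ hδ]; linarith
      rw [h2] at h1
      rw [hK]
      nlinarith
    rw [hc, Real.log_pow, ← Real.log_mul (by positivity) (by positivity)]
    gcongr
  have hsum : ∑ k ∈ F, (μ (A k)).toReal ≤ 1 := by
    rw [← ENNReal.toReal_sum fun k _ => measure_ne_top _ _,
      ← measure_biUnion_finset (fun k _ l _ h => hdisj h) fun k _ => hA k]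
    exact measureReal_le_one
  calc entH δ μ ≤ ∑' k, ENNReal.ofReal (Real.negMulLog (μ (A k)).toReal) :=
        entH_le_tsum μ hA hdiam hcover
    _ = ∑ k ∈ F, ENNReal.ofReal (Real.negMulLog (μ (A k)).toReal) :=
        tsum_eq_sum fun k hk => by simp [hzero k hk]
    _ = ENNReal.ofReal (∑ k ∈ F, Real.negMulLog (μ (A k)).toReal) :=
        (ENNReal.ofReal_sum_of_nonneg fun k _ =>
          Real.negMulLog_nonneg ENNReal.toReal_nonneg measureReal_le_one).symm
    _ ≤ ENNReal.ofReal ((d * (Real.log K + 1) + 1) * Real.log (1 / δ)) := by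
        refine ENNReal.ofReal_le_ofReal ((sum_negMulLog_le_log_card F
          (fun k _ => ENNReal.toReal_nonneg) hsum).trans ?_)
        have h1 : Real.log K ≤ Real.log K * Real.log (1 / δ) := le_mul_of_one_le_right hlogK hlogδ
        have h2 := mul_le_mul_of_nonneg_left h1 (Nat.cast_nonneg (α := ℝ) d)
        linarith

end EntropyOfCompactSupport

section Support

lemma ae_mem_msupport {α : Type*} [TopologicalSpace α] [HereditarilyLindelofSpace α]
    [MeasurableSpace α] (μ : Measure α) : ∀ᵐ x ∂μ, x ∈ msupport μ := by
  have h : msupport μ = μ.support := by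
    ext x
    rw [Measure.mem_support_iff_forall]
    refine ⟨fun hx U hU => ?_, fun hx U hU hxU => (hx U (hU.mem_nhds hxU)).ne'⟩
    obtain ⟨V, hVU, hV, hxV⟩ := mem_nhds_iff.1 hU
    exact (pos_iff_ne_zero.2 (hx V hV hxV)).trans_le (measure_mono hVU)
  rw [h]
  exact Measure.support_mem_ae

lemma ae_mem_prod_of_coupling {α β : Type*} [MeasurableSpace α] [MeasurableSpace β]
    {γ : Measure (α × β)} {μm : Measure α} {μp : Measure β}
    (hfst : γ.fst = μm) (hsnd : γ.snd = μp) {S : Set α} {T : Set β}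
    (hS : ∀ᵐ x ∂μm, x ∈ S) (hT : ∀ᵐ y ∂μp, y ∈ T) : ∀ᵐ p ∂γ, p ∈ S ×ˢ T := by
  rw [← hfst, Measure.fst] at hS
  rw [← hsnd, Measure.snd] at hT
  filter_upwards [ae_of_ae_map measurable_fst.aemeasurable hS,
    ae_of_ae_map measurable_snd.aemeasurable hT] with p h1 h2 using ⟨h1, h2⟩

lemma integrable_of_continuousOn_of_bound {X : Type*} [TopologicalSpace X] [MeasurableSpace X]
    [OpensMeasurableSpace X] {γ : Measure X} [IsFiniteMeasure γ] {K : Set X}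
    (hγ : ∀ᵐ p ∂γ, p ∈ K) (hKm : MeasurableSet K) {c : X → ℝ} (hc : ContinuousOn c K)
    {C : ℝ} (hC : ∀ p ∈ K, ‖c p‖ ≤ C) : Integrable c γ := by
  refine Integrable.of_bound ?_ C (hγ.mono hC)
  rw [← Measure.restrict_eq_self_of_ae_mem hγ]
  exact hc.aestronglyMeasurable hKm

lemma entCost_zero_le {α β : Type*} [MeasurableSpace α] [MeasurableSpace β] (μm : Measure α)
    (μp : Measure β) [IsProbabilityMeasure μm] [IsProbabilityMeasure μp] (c : α × β → ℝ) {ε : ℝ}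
    (hε : 0 ≤ ε) : entCost μm μp c 0 ≤ entCost μm μp c ε := by
  refine le_sInf ?_
  rintro v ⟨γ, hγ, h1, h2, rfl⟩
  have h : entCost μm μp c 0 ≤ (∫ p, c p ∂γ : ℝ) + ((0 : ℝ) : EReal) * Ent γ (μm.prod μp) :=
    sInf_le ⟨γ, hγ, h1, h2, rfl⟩
  rw [EReal.coe_zero, zero_mul] at h
  refine h.trans ?_
  exact add_le_add_right (mul_nonneg (EReal.coe_nonneg.2 hε) (Ent_nonneg _ _)) _

/-- For a Lipschitz cost on compact supports, the entropic cost exceeds the optimal transport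
cost by at most `ε (2L + 3 + H_ε)`. -/
lemma entCost_sub_entCost_zero_mem_Icc {α β : Type*} [MetricSpace α]
    [MeasurableSpace α] [BorelSpace α] [SecondCountableTopology α] [MetricSpace β]
    [MeasurableSpace β] [BorelSpace β] [SecondCountableTopology β] (μm : Measure α) (μp : Measure β)
    [IsProbabilityMeasure μm] [IsProbabilityMeasure μp]
    (hXm : IsCompact (msupport μm)) (hXp : IsCompact (msupport μp)) (c : α × β → ℝ)
    (L : ℝ≥0) (hc : LipschitzOnWith L c (msupport μm ×ˢ msupport μp)) {ε : ℝ} (hε : 0 < ε)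
    (hH : entH ε μp ≠ ∞) :
    (entCost μm μp c ε).toReal - (entCost μm μp c 0).toReal ∈
      Icc 0 (ε * (2 * L + 3 + (entH ε μp).toReal)) := by
  have hS := ae_mem_msupport μm
  have hT := ae_mem_msupport μp
  set S := msupport μm
  set T := msupport μp
  obtain ⟨C, hC⟩ := (hXm.prod hXp).exists_bound_of_continuousOn hc.continuousOn
  have hK : MeasurableSet (S ×ˢ T) := hXm.measurableSet.prod hXp.measurableSet
  have hcint : ∀ γ : Measure (α × β), IsProbabilityMeasure γ → γ.fst = μm → γ.snd = μp →
      Integrable c γ := fun γ _ h1 h2 =>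
    integrable_of_continuousOn_of_bound (ae_mem_prod_of_coupling h1 h2 hS hT) hK hc.continuousOn hC
  obtain ⟨N, hN, hNd, hNH⟩ := exists_partition_of_entH_ne_top μp hH
  have hcN : ∀ x ∈ S, ∀ y ∈ T, ∀ y' ∈ T, N y' = N y →
      c (x, y') ≤ c (x, y) + L * (2 * ε) := by
    intro x hx y hy y' hy' hyy
    have h1 := hc.dist_le_mul (x, y') ⟨hx, hy'⟩ (x, y) ⟨hx, hy⟩
    have h2 : dist y' y ≤ 2 * ε := by
      have h := hNd y' y hyy
      rw [edist_dist, ← ENNReal.ofReal_ofNat 2, ← ENNReal.ofReal_mul (by norm_num)] at h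
      exact (ENNReal.ofReal_le_ofReal_iff (by positivity)).1 h
    have h3 : dist (x, y') (x, y) = dist y' y := by simp [Prod.dist_eq]
    rw [h3] at h1
    have h4 := (abs_le.1 ((Real.dist_eq _ _).symm.le.trans h1)).2
    have h5 := mul_le_mul_of_nonneg_left h2 L.coe_nonneg
    linarith
  have hub := fun γ (hγ : IsProbabilityMeasure γ) h1 h2 =>
    entCost_le_of_partition μm μp hε.le hS hT hcint hN hcN
      (h := (entH ε μp).toReal + 3) (by positivity) hNH γ h1 h2
  have hle := entCost_zero_le μm μp c hε.le
  have hbot : ((-C : ℝ) : EReal) ≤ entCost μm μp c 0 := by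
    refine le_sInf ?_
    rintro v ⟨γ, hγ, h1, h2, rfl⟩
    rw [EReal.coe_zero, zero_mul, add_zero, EReal.coe_le_coe_iff]
    calc -C = ∫ _, -C ∂γ := by simp
      _ ≤ ∫ p, c p ∂γ := by
        refine integral_mono_ae (integrable_const _) (hcint γ hγ h1 h2) ?_
        filter_upwards [ae_mem_prod_of_coupling h1 h2 hS hT] with p hp
        exact (abs_le.1 (hC p hp)).1
  have htop := (hub (μm.prod μp) inferInstance (by simp) (by simp)).trans_lt (EReal.coe_lt_top _)
  have h0bot : entCost μm μp c 0 ≠ ⊥ := ((EReal.bot_lt_coe _).trans_le hbot).ne'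
  have h0 := EReal.coe_toReal (hle.trans_lt htop).ne h0bot
  have h1 := EReal.coe_toReal htop.ne ((bot_lt_iff_ne_bot.2 h0bot).trans_le hle).ne'
  rw [← h0, ← h1, EReal.coe_le_coe_iff] at hle
  refine ⟨sub_nonneg.2 hle, ?_⟩
  have : (((entCost μm μp c ε).toReal - ε * (2 * L + 3 + (entH ε μp).toReal) : ℝ) : EReal) ≤
      entCost μm μp c 0 := by
    refine le_sInf ?_
    rintro v ⟨γ, hγ, hf, hs, rfl⟩
    have h := hub γ hγ hf hs
    rw [← h1, EReal.coe_le_coe_iff] at h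
    rw [EReal.coe_zero, zero_mul, add_zero, EReal.coe_le_coe_iff]
    linarith
  rw [← h0, EReal.coe_le_coe_iff] at this
  linarith

end Support

lemma limsup_entCost_le_upperEntDim_snd {d : ℕ} (μm μp : Measure (EuclideanSpace ℝ (Fin d)))
    [IsProbabilityMeasure μm] [IsProbabilityMeasure μp]
    (hXm : IsCompact (msupport μm)) (hXp : IsCompact (msupport μp))
    (c : EuclideanSpace ℝ (Fin d) × EuclideanSpace ℝ (Fin d) → ℝ)
    (L : ℝ≥0) (hc : LipschitzOnWith L c (msupport μm ×ˢ msupport μp)) :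
    limsup (fun ε : ℝ => ((entCost μm μp c ε).toReal - (entCost μm μp c 0).toReal)
        / (ε * Real.log (1 / ε))) (𝓝[>] 0) ≤ upperEntDim μp := by
  obtain ⟨R, hR, hRb⟩ := hXp.isBounded.exists_pos_norm_le
  obtain ⟨C, hC, hCH⟩ := exists_entH_le_mul_log μp hR.le
    ((ae_mem_msupport μp).mono fun x hx => hRb x hx)
  have hsmall : ∀ᶠ ε : ℝ in 𝓝[>] 0, 0 < ε ∧ ε ≤ Real.exp (-1) :=
    Ioc_mem_nhdsGT (Real.exp_pos _)
  have hlogpos : ∀ ε : ℝ, 0 < ε → ε ≤ Real.exp (-1) → 0 < Real.log (1 / ε) := by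
    intro ε h0 h1
    rw [one_div, Real.log_inv, neg_pos]
    exact Real.log_neg h0 (h1.trans_lt (Real.exp_lt_one_iff.2 (by norm_num)))
  have hbdd : IsBoundedUnder (· ≤ ·) (𝓝[>] (0 : ℝ))
      fun δ : ℝ => (entH δ μp).toReal / Real.log (1 / δ) := by
    refine isBoundedUnder_of_eventually_le (a := C) ?_
    filter_upwards [hsmall] with ε ⟨h0, h1⟩
    have hl := hlogpos ε h0 h1
    rw [div_le_iff₀ hl]
    exact ENNReal.toReal_le_of_le_ofReal (by positivity) (hCH ε h0 h1)
  have hlog : Tendsto (fun ε : ℝ => (2 * L + 3) / Real.log (1 / ε)) (𝓝[>] 0) (𝓝 0) := by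
    simp only [one_div]
    exact (Real.tendsto_log_atTop.comp tendsto_inv_nhdsGT_zero).const_div_atTop _
  have hmem : ∀ᶠ ε : ℝ in 𝓝[>] 0,
      ((entCost μm μp c ε).toReal - (entCost μm μp c 0).toReal) / (ε * Real.log (1 / ε)) ∈
        Icc 0 ((2 * L + 3) / Real.log (1 / ε) + (entH ε μp).toReal / Real.log (1 / ε)) := by
    filter_upwards [hsmall] with ε ⟨h0, h1⟩
    have hl := hlogpos ε h0 h1
    obtain ⟨hlo, hhi⟩ := entCost_sub_entCost_zero_mem_Icc μm μp hXm hXp c L hc h0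
      ((hCH ε h0 h1).trans_lt ENNReal.ofReal_lt_top).ne
    refine ⟨by positivity, ?_⟩
    rw [← add_div, div_le_div_iff₀ (by positivity) hl]
    calc _ ≤ ε * (2 * L + 3 + (entH ε μp).toReal) * Real.log (1 / ε) := by gcongr
      _ = _ := by ring
  refine le_of_forall_pos_le_add fun η hη => ?_
  have hdim := eventually_lt_of_limsup_lt (lt_add_of_pos_right (upperEntDim μp) (half_pos hη)) hbdd
  refine limsup_le_of_le (isCoboundedUnder_le_of_eventually_le _ (hmem.mono fun ε h => h.1)) ?_
  filter_upwards [hmem, hdim, hlog.eventually_lt_const (half_pos hη)] with ε h1 h2 h3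
  linarith [h1.2]

/-- For Lipschitz costs, `limsup_{ε→0⁺} (v_ε − v₀)/(ε log(1/ε)) ≤ min(d⁺, d⁻)` where `d^±`
are the upper entropy dimensions of the marginals. -/
theorem entCost_upper_bound_entropy_dimension {d : ℕ}
    (μm μp : Measure (EuclideanSpace ℝ (Fin d)))
    [IsProbabilityMeasure μm] [IsProbabilityMeasure μp]
    (hXm : IsCompact (msupport μm)) (hXp : IsCompact (msupport μp))
    (c : EuclideanSpace ℝ (Fin d) × EuclideanSpace ℝ (Fin d) → ℝ)
    (L : ℝ≥0) (hc : LipschitzOnWith L c (msupport μm ×ˢ msupport μp)) :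
    Filter.limsup
      (fun ε : ℝ => ((entCost μm μp c ε).toReal - (entCost μm μp c 0).toReal)
        / (ε * Real.log (1 / ε)))
      (nhdsWithin 0 (Set.Ioi 0))
      ≤ min (upperEntDim μp) (upperEntDim μm) := by
  refine le_min (limsup_entCost_le_upperEntDim_snd μm μp hXm hXp c L hc) ?_
  have hc' : LipschitzOnWith L (c ∘ Prod.swap) (msupport μp ×ˢ msupport μm) := by
    intro p hp q hq
    refine (hc ⟨hp.2, hp.1⟩ ⟨hq.2, hq.1⟩).trans_eq ?_
    simp only [Prod.edist_eq, Prod.fst_swap, Prod.snd_swap, max_comm]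
  simpa only [entCost_swap] using
    limsup_entCost_le_upperEntDim_snd μp μm hXp hXm (c ∘ Prod.swap) L hc'
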